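/- Let 𝒰 ⊂ ℝ^m be a finite set with 0 ∈ 𝒰 such that 0 lies in the interior of the convex hull of 𝒰. Then there exists δ > 0 such that for every η ∈ ℝ^m with ‖η‖ > δ there exists u ∈ 𝒰 with ‖η − u‖ < ‖η‖. -/

import Mathlib

/-!
Expanding the square, `‖η - u‖ < ‖η‖` means `‖u‖ ^ 2 < 2 * ⟪η, u⟫`. If the convex hull of `U`
contains the ball of radius `r`, then the linear functional `⟪η, ·⟫` takes the value `r * ‖η‖` on
the hull, hence at least that value at some `u ∈ U`. When `U` lies in the ball of radius `R`,
this `u` works as soon as `R ^ 2 < 2 * r * ‖η‖`, so `δ = R ^ 2 / (2 * r)` suffices.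
-/

section InnerProductSpace

variable {E : Type*} [SeminormedAddCommGroup E] [InnerProductSpace ℝ E]

theorem norm_sub_lt_norm_left_iff_sq_lt_two_mul_inner {x y : E} :
    ‖x - y‖ < ‖x‖ ↔ ‖y‖ ^ 2 < 2 * inner ℝ x y := by
  rw [← sq_lt_sq₀ (norm_nonneg _) (norm_nonneg _), norm_sub_sq_real]
  constructor <;> intro h <;> linarith

theorem exists_mul_norm_le_inner_of_closedBall_subset_convexHull {U : Set E} {r : ℝ} (hr : 0 ≤ r)
    (hball : Metric.closedBall 0 r ⊆ convexHull ℝ U) (x : E) :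
    ∃ u ∈ U, r * ‖x‖ ≤ inner ℝ x u := by
  -- If `‖x‖ = 0`, then `r / ‖x‖ = 0` and the test point is `0`, so no case split is needed.
  have hmem : (r / ‖x‖) • x ∈ convexHull ℝ U := by
    apply hball
    rw [mem_closedBall_zero_iff, norm_smul, Real.norm_of_nonneg (by positivity),
      div_mul_eq_mul_div, mul_div_assoc]
    exact mul_le_of_le_one_right hr (div_self_le_one _)
  have hinner : inner ℝ x ((r / ‖x‖) • x) = r * ‖x‖ := by
    rw [real_inner_smul_self_right, div_mul_eq_mul_div, mul_div_assoc, mul_self_div_self]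
  have hconv : ConvexOn ℝ Set.univ fun y : E ↦ inner ℝ x y :=
    (innerₛₗ ℝ x).convexOn convex_univ
  obtain ⟨u, hu, hle⟩ := hconv.exists_ge_of_mem_convexHull (Set.subset_univ U) hmem
  exact ⟨u, hu, hinner ▸ hle⟩

theorem exists_delta_nearest_neighbor_decrease_general {U : Set E} (hU : Bornology.IsBounded U)
    (h0int : (0 : E) ∈ interior (convexHull ℝ U)) :
    ∃ δ : ℝ, 0 < δ ∧ ∀ η : E, ‖η‖ > δ → ∃ u ∈ U, ‖η - u‖ < ‖η‖ := by
  obtain ⟨r, hr, hball⟩ :=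
    Metric.nhds_basis_closedBall.mem_iff.1 (mem_interior_iff_mem_nhds.1 h0int)
  obtain ⟨R, hR, hUR⟩ := hU.exists_pos_norm_le
  refine ⟨R ^ 2 / (2 * r), by positivity, fun η hη ↦ ?_⟩
  obtain ⟨u, hu, hinner⟩ :=
    exists_mul_norm_le_inner_of_closedBall_subset_convexHull hr.le hball η
  refine ⟨u, hu, norm_sub_lt_norm_left_iff_sq_lt_two_mul_inner.2 ?_⟩
  calc ‖u‖ ^ 2 ≤ R ^ 2 := by gcongr; exact hUR u hu
    _ < 2 * r * ‖η‖ := (div_lt_iff₀' (by positivity)).1 hη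
    _ ≤ 2 * inner ℝ η u := by linarith

end InnerProductSpace

/-- Lemma 1 (second form): if `0 ∈ 𝒰` and `0` lies in the interior of the convex hull of the
finite set `𝒰 ⊂ ℝ^m`, then there is `δ > 0` such that any `η` with `‖η‖ > δ` admits a point
`u ∈ 𝒰` that strictly decreases the distance: `‖η − u‖ < ‖η‖`. -/
theorem exists_delta_nearest_neighbor_decrease (m : ℕ) (U : Finset (EuclideanSpace ℝ (Fin m)))
    (h0U : (0 : EuclideanSpace ℝ (Fin m)) ∈ U)
    (h0int : (0 : EuclideanSpace ℝ (Fin m)) ∈ interior (convexHull ℝ (U : Set (EuclideanSpace ℝ (Fin m))))) :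
    ∃ δ : ℝ, 0 < δ ∧
      ∀ η : EuclideanSpace ℝ (Fin m), ‖η‖ > δ → ∃ u ∈ U, ‖η - u‖ < ‖η‖ :=
  exists_delta_nearest_neighbor_decrease_general U.finite_toSet.isBounded h0int
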